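/- Let k be a nonzero element of ℤ² and let g : (0,∞) → ℂ be measurable with ∫₀^∞ |g(w)|² · 2π w (1 + w²) dw < ∞. Then the integral 2π ∫₀^∞ J⁰(‖k‖·w) · g(w) · w dw converges absolutely and satisfies (1 + ‖k‖²)^{1/4} · |2π ∫₀^∞ J⁰(‖k‖·w) g(w) w dw| ≤ 2^{1/4} · π · ( ∫₀^∞ |g(w)|² · 2π w (1 + w²) dw )^{1/2}. This is the per-Fourier-mode form of the estimate ‖ρ − 1‖_{H^{s+1/2}} ≤ 2^{1/4} π ‖f‖_{L²_m(H^s)} for the gyro-averaged density ρ(x) = ∫ J⁰_w f(x,w) 2π w dw. -/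

import Mathlib

open MeasureTheory Real

/-- The zeroth-order Bessel function `J⁰(k) = (1/π) ∫₀^π cos(k cos θ) dθ`. -/
noncomputable def J0 (k : ℝ) : ℝ :=
  (1 / Real.pi) * ∫ θ in (0:ℝ)..Real.pi, Real.cos (k * Real.cos θ)

/-- The Euclidean norm of `k ∈ ℤ²`. -/
noncomputable def eNorm (k : ℤ × ℤ) : ℝ :=
  Real.sqrt ((k.1 : ℝ) ^ 2 + (k.2 : ℝ) ^ 2)

/-!
The heart of the matter is the decay `x J⁰(x)² ≤ 1` for `x > 0`. The function `u(x) = √x J⁰(x)`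
solves `u'' + (1 + 1/(4x²)) u = 0`, whose potential is decreasing, so the energy
`u'² + (1 + 1/(4x²)) u² ≥ u²` decreases; at `x = 1` it is at most `1` by crude estimates of the
defining integrals, and for `x ≤ 1` already `|J⁰| ≤ 1` suffices. The decay gives
`‖J⁰(K w) w g(w)‖² ≤ ‖g(w)‖² 2πw (1 + w²) · (2πK (1 + w²))⁻¹`, and Cauchy–Schwarz concludes, because
`∫₀^∞ dw / (1 + w²) = π / 2`.
-/

section CauchySchwarz

variable {α E : Type*} [MeasurableSpace α] [NormedAddCommGroup E] {μ : Measure α}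
  {F G : α → ℝ} {f : α → E}

theorem memLp_two_sqrt_of_integrable (hF : Integrable F μ) (hF₀ : 0 ≤ᵐ[μ] F) :
    MemLp (fun x => √(F x)) 2 μ := by
  have hmeas : AEStronglyMeasurable (fun x => √(F x)) μ :=
    continuous_sqrt.comp_aestronglyMeasurable hF.aestronglyMeasurable
  exact (memLp_two_iff_integrable_sq hmeas).2 (hF.congr (hF₀.mono fun x hx => (sq_sqrt hx).symm))

theorem integrable_sqrt_mul_sqrt (hF : Integrable F μ) (hF₀ : 0 ≤ᵐ[μ] F) (hG : Integrable G μ)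
    (hG₀ : 0 ≤ᵐ[μ] G) : Integrable (fun x => √(F x) * √(G x)) μ :=
  (memLp_two_sqrt_of_integrable hF hF₀).integrable_mul (memLp_two_sqrt_of_integrable hG hG₀)

theorem integral_sqrt_mul_sqrt_le (hF : Integrable F μ) (hF₀ : 0 ≤ᵐ[μ] F) (hG : Integrable G μ)
    (hG₀ : 0 ≤ᵐ[μ] G) : ∫ x, √(F x) * √(G x) ∂μ ≤ √(∫ x, F x ∂μ) * √(∫ x, G x ∂μ) := by
  have h := integral_mul_le_Lp_mul_Lq_of_nonneg (μ := μ) HolderConjugate.two_two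
    (.of_forall fun x => sqrt_nonneg (F x)) (.of_forall fun x => sqrt_nonneg (G x))
    (by simpa using memLp_two_sqrt_of_integrable hF hF₀)
    (by simpa using memLp_two_sqrt_of_integrable hG hG₀)
  simp only [rpow_two, ← sqrt_eq_rpow] at h
  rwa [integral_congr_ae (hF₀.mono fun x hx => sq_sqrt hx),
    integral_congr_ae (hG₀.mono fun x hx => sq_sqrt hx)] at h

theorem norm_le_sqrt_mul_sqrt_of_sq_le (hF₀ : 0 ≤ᵐ[μ] F)
    (hle : ∀ᵐ x ∂μ, ‖f x‖ ^ 2 ≤ F x * G x) : ∀ᵐ x ∂μ, ‖f x‖ ≤ √(F x) * √(G x) := by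
  filter_upwards [hF₀, hle] with x hx hxle
  rw [← sqrt_mul hx]
  exact le_sqrt_of_sq_le hxle

theorem integrable_of_norm_sq_le_mul (hf : AEStronglyMeasurable f μ) (hF : Integrable F μ)
    (hF₀ : 0 ≤ᵐ[μ] F) (hG : Integrable G μ) (hG₀ : 0 ≤ᵐ[μ] G)
    (hle : ∀ᵐ x ∂μ, ‖f x‖ ^ 2 ≤ F x * G x) : Integrable f μ :=
  (integrable_sqrt_mul_sqrt hF hF₀ hG hG₀).mono' hf (norm_le_sqrt_mul_sqrt_of_sq_le hF₀ hle)

theorem integral_norm_le_sqrt_mul_sqrt (hF : Integrable F μ) (hF₀ : 0 ≤ᵐ[μ] F)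
    (hG : Integrable G μ) (hG₀ : 0 ≤ᵐ[μ] G) (hle : ∀ᵐ x ∂μ, ‖f x‖ ^ 2 ≤ F x * G x) :
    ∫ x, ‖f x‖ ∂μ ≤ √(∫ x, F x ∂μ) * √(∫ x, G x ∂μ) :=
  (integral_mono_of_nonneg (.of_forall fun _ => norm_nonneg _)
    (integrable_sqrt_mul_sqrt hF hF₀ hG hG₀) (norm_le_sqrt_mul_sqrt_of_sq_le hF₀ hle)).trans
    (integral_sqrt_mul_sqrt_le hF hF₀ hG hG₀)

end CauchySchwarz

theorem hasDerivAt_intervalIntegral_of_continuous {𝕜 E : Type*} [RCLike 𝕜]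
    [NormedAddCommGroup E] [NormedSpace ℝ E] [NormedSpace 𝕜 E] {F F' : 𝕜 → ℝ → E} {a b : ℝ}
    (hF : ∀ y, Continuous (F y)) (hF' : Continuous (Function.uncurry F'))
    (hd : ∀ y t, HasDerivAt (fun z => F z t) (F' y t) y) (x : 𝕜) :
    HasDerivAt (fun y => ∫ t in a..b, F y t) (∫ t in a..b, F' x t) x := by
  obtain ⟨C, hC⟩ := ((isCompact_closedBall x 1).prod isCompact_uIcc).exists_bound_of_continuousOn
    (hF'.continuousOn (s := Metric.closedBall x 1 ×ˢ Set.uIcc a b))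
  exact (intervalIntegral.hasDerivAt_integral_of_dominated_loc_of_deriv_le (bound := fun _ => C)
    (Metric.closedBall_mem_nhds x one_pos)
    (.of_forall fun y => (hF y).aestronglyMeasurable)
    ((hF x).intervalIntegrable a b) (hF'.uncurry_left x).aestronglyMeasurable
    (.of_forall fun t ht y hy => hC (y, t) ⟨hy, Set.uIoc_subset_uIcc ht⟩)
    intervalIntegrable_const (.of_forall fun t _ y _ => hd y t)).2

/-- The first-order Bessel function `J¹(k) = (1/π) ∫₀^π sin(k cos θ) cos θ dθ`, normalised so that
`J1` is minus the derivative of `J0`. -/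
noncomputable def J1 (k : ℝ) : ℝ :=
  (1 / π) * ∫ θ in (0 : ℝ)..π, sin (k * cos θ) * cos θ

theorem hasDerivAt_J0 (x : ℝ) : HasDerivAt J0 (-J1 x) x := by
  have h := (hasDerivAt_intervalIntegral_of_continuous (a := 0) (b := π)
    (F := fun y θ => cos (y * cos θ)) (F' := fun y θ => -(sin (y * cos θ) * cos θ))
    (by fun_prop) (by fun_prop)
    (fun y θ => by simpa using ((hasDerivAt_id y).mul_const (cos θ)).cos) x).const_mul (1 / π)
  rwa [intervalIntegral.integral_neg, mul_neg] at h

theorem continuous_J0 : Continuous J0 :=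
  continuous_iff_continuousAt.2 fun x => (hasDerivAt_J0 x).continuousAt

-- Integration by parts, with `sin (x cos θ) sin θ` vanishing at both ends.
theorem J1_eq_mul_integral (x : ℝ) :
    J1 x = x / π * ∫ θ in (0 : ℝ)..π, cos (x * cos θ) * sin θ ^ 2 := by
  have hd (θ : ℝ) : HasDerivAt (fun θ => sin (x * cos θ) * sin θ)
      (sin (x * cos θ) * cos θ - x * (cos (x * cos θ) * sin θ ^ 2)) θ :=
    ((((hasDerivAt_cos θ).const_mul x).sin).mul (hasDerivAt_sin θ)).congr_deriv (by ring)
  have h := intervalIntegral.integral_eq_sub_of_hasDerivAt (a := 0) (b := π)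
    (fun θ _ => hd θ) (Continuous.intervalIntegrable (by fun_prop) _ _)
  rw [intervalIntegral.integral_sub (Continuous.intervalIntegrable (by fun_prop) _ _)
    (Continuous.intervalIntegrable (by fun_prop) _ _), intervalIntegral.integral_const_mul,
    sin_pi, sin_zero, mul_zero, mul_zero, sub_zero, sub_eq_zero] at h
  rw [J1, h]
  ring

theorem hasDerivAt_J1 {x : ℝ} (hx : x ≠ 0) : HasDerivAt J1 (J0 x - J1 x / x) x := by
  have h := (hasDerivAt_intervalIntegral_of_continuous (a := 0) (b := π)
    (F := fun y θ => sin (y * cos θ) * cos θ)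
    (F' := fun y θ => cos (y * cos θ) - cos (y * cos θ) * sin θ ^ 2)
    (by fun_prop) (by fun_prop)
    (fun y θ => (((hasDerivAt_mul_const (cos θ)).sin).mul_const (cos θ)).congr_deriv (by
      rw [sin_sq]; ring)) x).const_mul (1 / π)
  rw [intervalIntegral.integral_sub (Continuous.intervalIntegrable (by fun_prop) _ _)
    (Continuous.intervalIntegrable (by fun_prop) _ _)] at h
  refine h.congr_deriv ?_
  rw [J0, J1_eq_mul_integral]
  field_simp

theorem abs_J0_le_one (x : ℝ) : |J0 x| ≤ 1 := by
  have h := intervalIntegral.norm_integral_le_of_norm_le_const (a := 0) (b := π) (C := 1)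
    (f := fun θ => cos (x * cos θ)) fun θ _ => abs_cos_le_one _
  rw [sub_zero, abs_of_pos pi_pos, one_mul, norm_eq_abs] at h
  rw [J0, abs_mul, abs_of_pos (by positivity), one_div_mul_eq_div]
  exact div_le_one_of_le₀ h pi_pos.le

theorem cos_mul_cos_nonneg {x : ℝ} (hx : |x| ≤ π / 2) (θ : ℝ) : 0 ≤ cos (x * cos θ) := by
  have h : |x * cos θ| ≤ π / 2 := by
    rw [abs_mul]
    exact (mul_le_of_le_one_right (abs_nonneg x) (abs_cos_le_one θ)).trans hx
  exact cos_nonneg_of_mem_Icc (abs_le.1 h)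

theorem J0_nonneg {x : ℝ} (hx : |x| ≤ π / 2) : 0 ≤ J0 x :=
  mul_nonneg (by positivity)
    (intervalIntegral.integral_nonneg pi_pos.le fun θ _ => cos_mul_cos_nonneg hx θ)

theorem J0_le_one_sub_sq_div_five {x : ℝ} (hx : |x| ≤ 1) : J0 x ≤ 1 - x ^ 2 / 5 := by
  have hcos (θ : ℝ) : cos (x * cos θ) ≤ 1 - 2 / 5 * x ^ 2 * cos θ ^ 2 := by
    have hle : |x * cos θ| ≤ 1 := by
      rw [abs_mul]
      exact mul_le_one₀ hx (abs_nonneg _) (abs_cos_le_one θ)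
    have hquart : |x * cos θ| ^ 4 ≤ (x * cos θ) ^ 2 := by
      rw [← sq_abs (x * cos θ)]
      exact pow_le_pow_of_le_one (abs_nonneg _) hle (by norm_num)
    have htaylor := (abs_le.1 (cos_bound hle)).2
    linarith [mul_pow x (cos θ) 2, sq_nonneg (x * cos θ)]
  have h : ∫ θ in (0 : ℝ)..π, cos (x * cos θ) ≤
      ∫ θ in (0 : ℝ)..π, (1 - 2 / 5 * x ^ 2 * cos θ ^ 2) :=
    intervalIntegral.integral_mono pi_pos.le
      (Continuous.intervalIntegrable (by fun_prop) _ _)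
      (Continuous.intervalIntegrable (by fun_prop) _ _) hcos
  have hval : ∫ θ in (0 : ℝ)..π, (1 - 2 / 5 * x ^ 2 * cos θ ^ 2) = π * (1 - x ^ 2 / 5) := by
    rw [intervalIntegral.integral_sub intervalIntegrable_const
      (Continuous.intervalIntegrable (by fun_prop) _ _), intervalIntegral.integral_const_mul,
      intervalIntegral.integral_const, integral_cos_sq, sin_pi, sin_zero, smul_eq_mul]
    ring
  rw [J0, one_div_mul_eq_div, div_le_iff₀' pi_pos]
  exact h.trans_eq hval

theorem J1_nonneg {x : ℝ} (hx₀ : 0 ≤ x) (hx : x ≤ π / 2) : 0 ≤ J1 x := by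
  rw [J1_eq_mul_integral]
  refine mul_nonneg (by positivity) (intervalIntegral.integral_nonneg pi_pos.le fun θ _ => ?_)
  exact mul_nonneg (cos_mul_cos_nonneg (by rwa [abs_of_nonneg hx₀]) θ) (sq_nonneg _)

theorem J1_le_div_two {x : ℝ} (hx : 0 ≤ x) : J1 x ≤ x / 2 := by
  have h : ∫ θ in (0 : ℝ)..π, cos (x * cos θ) * sin θ ^ 2 ≤ ∫ θ in (0 : ℝ)..π, sin θ ^ 2 :=
    intervalIntegral.integral_mono pi_pos.le
      (Continuous.intervalIntegrable (by fun_prop) _ _)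
      (Continuous.intervalIntegrable (by fun_prop) _ _)
      fun θ => mul_le_of_le_one_left (sq_nonneg _) (cos_le_one _)
  rw [integral_sin_sq, sin_pi, sin_zero, zero_mul, zero_mul, sub_self, zero_add, sub_zero] at h
  calc J1 x = x / π * ∫ θ in (0 : ℝ)..π, cos (x * cos θ) * sin θ ^ 2 := J1_eq_mul_integral x
    _ ≤ x / π * (π / 2) := by gcongr
    _ = x / 2 := by field_simp

/-- The energy `u'² + (1 + 1/(4x²)) u²` of `u(x) = √x J⁰(x)`, with `-J1` substituted for
the derivative of `J0`; meaningful for `x > 0`. -/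
noncomputable def besselEnergy (x : ℝ) : ℝ :=
  x * (J0 x ^ 2 + J1 x ^ 2) - J0 x * J1 x + J0 x ^ 2 / (2 * x)

theorem hasDerivAt_besselEnergy {x : ℝ} (hx : x ≠ 0) :
    HasDerivAt besselEnergy (-(J0 x ^ 2 / (2 * x ^ 2))) x := by
  have h0 := hasDerivAt_J0 x
  have h1 := hasDerivAt_J1 hx
  have h := (((hasDerivAt_id x).mul ((h0.pow 2).add (h1.pow 2))).sub (h0.mul h1)).add
    ((h0.pow 2).div ((hasDerivAt_id x).const_mul 2) (by simpa using hx))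
  refine h.congr_deriv ?_
  simp only [id, Pi.add_apply, Pi.pow_apply]
  field_simp
  ring

theorem antitoneOn_besselEnergy : AntitoneOn besselEnergy (Set.Ioi 0) := by
  have hd : ∀ x ∈ Set.Ioi (0 : ℝ), HasDerivAt besselEnergy (-(J0 x ^ 2 / (2 * x ^ 2))) x :=
    fun x hx => hasDerivAt_besselEnergy (ne_of_gt hx)
  refine antitoneOn_of_hasDerivWithinAt_nonpos (convex_Ioi 0)
    (HasDerivAt.continuousOn hd)
    (fun x hx => (hd x (interior_subset hx)).hasDerivWithinAt)
    fun x _ => neg_nonpos.2 (by positivity)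

theorem besselEnergy_one_le : besselEnergy 1 ≤ 1 := by
  have hpi : (1 : ℝ) ≤ π / 2 := one_le_pi_div_two
  have hJ0 : 0 ≤ J0 1 := J0_nonneg (by rwa [abs_one])
  have hJ0' : J0 1 ≤ 1 - 1 ^ 2 / 5 := J0_le_one_sub_sq_div_five abs_one.le
  have hJ1 : 0 ≤ J1 1 := J1_nonneg zero_le_one hpi
  have hJ1' : J1 1 ≤ 1 / 2 := J1_le_div_two zero_le_one
  rw [besselEnergy]
  nlinarith

theorem mul_J0_sq_le_besselEnergy {x : ℝ} (hx : 0 < x) : x * J0 x ^ 2 ≤ besselEnergy x := by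
  have h : besselEnergy x =
      x * J0 x ^ 2 + (x * (J1 x - J0 x / (2 * x)) ^ 2 + J0 x ^ 2 / (4 * x)) := by
    rw [besselEnergy]
    field_simp
    ring
  rw [h]
  exact le_add_of_nonneg_right (by positivity)

theorem mul_J0_sq_le_one {x : ℝ} (hx : 0 < x) : x * J0 x ^ 2 ≤ 1 := by
  rcases le_total x 1 with hx1 | hx1
  · exact mul_le_one₀ hx1 (sq_nonneg _) ((sq_le_one_iff_abs_le_one _).2 (abs_J0_le_one x))
  · calc x * J0 x ^ 2 ≤ besselEnergy x := mul_J0_sq_le_besselEnergy hx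
      _ ≤ besselEnergy 1 := antitoneOn_besselEnergy (Set.mem_Ioi.2 one_pos) hx hx1
      _ ≤ 1 := besselEnergy_one_le

theorem integral_Ioi_inv_mul_inv_one_add_sq (K : ℝ) :
    ∫ w in Set.Ioi (0 : ℝ), (2 * π * K)⁻¹ * (1 + w ^ 2)⁻¹ = (4 * K)⁻¹ := by
  rw [integral_const_mul, integral_Ioi_inv_one_add_sq, arctan_zero, sub_zero]
  field_simp
  norm_num

theorem one_add_sq_rpow_quarter_le {K : ℝ} (hK : 1 ≤ K) :
    (1 + K ^ 2) ^ ((1 : ℝ) / 4) ≤ 2 ^ ((1 : ℝ) / 4) * √K := by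
  have hK₀ : 0 ≤ K := zero_le_one.trans hK
  calc (1 + K ^ 2) ^ ((1 : ℝ) / 4) ≤ (2 * K ^ 2) ^ ((1 : ℝ) / 4) := by
        gcongr
        linarith [one_le_pow₀ hK (n := 2)]
    _ = 2 ^ ((1 : ℝ) / 4) * √K := by
        rw [mul_rpow zero_le_two (sq_nonneg K), ← rpow_natCast K 2, ← rpow_mul hK₀, sqrt_eq_rpow]
        norm_num

theorem one_le_eNorm {k : ℤ × ℤ} (hk : k ≠ 0) : 1 ≤ eNorm k := by
  have hpos : 0 < k.1 ^ 2 + k.2 ^ 2 := by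
    by_contra! h
    have h₁ : k.1 = 0 := by nlinarith [sq_nonneg k.1, sq_nonneg k.2]
    have h₂ : k.2 = 0 := by nlinarith [sq_nonneg k.1, sq_nonneg k.2]
    exact hk (Prod.ext h₁ h₂)
  rw [eNorm, one_le_sqrt]
  exact_mod_cast hpos

theorem ae_norm_sq_mul_weight_nonneg {E : Type*} [SeminormedAddGroup E] (g : ℝ → E) :
    0 ≤ᵐ[volume.restrict (Set.Ioi 0)] fun w => ‖g w‖ ^ 2 * (2 * π * w * (1 + w ^ 2)) :=
  ae_restrict_of_forall_mem measurableSet_Ioi fun w (hw : 0 < w) => by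
    rw [Pi.zero_apply]
    positivity

section GyroAverage

variable {E : Type*} [NormedAddCommGroup E] [NormedSpace ℝ E] {g : ℝ → E} {K : ℝ}

theorem norm_J0_smul_sq_le {w : ℝ} (hK : 0 < K) (hw : 0 < w) (v : E) :
    ‖(J0 (K * w) * w) • v‖ ^ 2 ≤
      ‖v‖ ^ 2 * (2 * π * w * (1 + w ^ 2)) * ((2 * π * K)⁻¹ * (1 + w ^ 2)⁻¹) := by
  have hdecay : J0 (K * w) ^ 2 * w ≤ K⁻¹ := by
    rw [← one_div, le_div_iff₀ hK]
    linarith [mul_J0_sq_le_one (mul_pos hK hw)]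
  calc ‖(J0 (K * w) * w) • v‖ ^ 2 = ‖v‖ ^ 2 * w * (J0 (K * w) ^ 2 * w) := by
        rw [norm_smul, mul_pow, norm_eq_abs, sq_abs]
        ring
    _ ≤ ‖v‖ ^ 2 * w * K⁻¹ := by gcongr
    _ = ‖v‖ ^ 2 * (2 * π * w * (1 + w ^ 2)) * ((2 * π * K)⁻¹ * (1 + w ^ 2)⁻¹) := by field_simp

theorem integrableOn_J0_smul (hK : 0 < K)
    (hg : AEStronglyMeasurable g (volume.restrict (Set.Ioi 0)))
    (hint : IntegrableOn (fun w => ‖g w‖ ^ 2 * (2 * π * w * (1 + w ^ 2))) (Set.Ioi 0)) :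
    IntegrableOn (fun w => (J0 (K * w) * w) • g w) (Set.Ioi 0) := by
  have hJ : Continuous fun w => J0 (K * w) * w :=
    (continuous_J0.comp (continuous_const_mul K)).mul continuous_id
  exact integrable_of_norm_sq_le_mul (hJ.aestronglyMeasurable.smul hg) hint
    (ae_norm_sq_mul_weight_nonneg g) (integrable_inv_one_add_sq.const_mul _).restrict
    (.of_forall fun w => by positivity)
    (ae_restrict_of_forall_mem measurableSet_Ioi fun w hw => norm_J0_smul_sq_le hK hw (g w))

theorem integral_norm_J0_smul_le (hK : 0 < K)
    (hint : IntegrableOn (fun w => ‖g w‖ ^ 2 * (2 * π * w * (1 + w ^ 2))) (Set.Ioi 0)) :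
    ∫ w in Set.Ioi 0, ‖(J0 (K * w) * w) • g w‖ ≤
      √(∫ w in Set.Ioi 0, ‖g w‖ ^ 2 * (2 * π * w * (1 + w ^ 2))) * (2 * √K)⁻¹ := by
  have h := integral_norm_le_sqrt_mul_sqrt hint (ae_norm_sq_mul_weight_nonneg g)
    (integrable_inv_one_add_sq.const_mul _).restrict (.of_forall fun w => by positivity)
    (ae_restrict_of_forall_mem measurableSet_Ioi fun w hw => norm_J0_smul_sq_le hK hw (g w))
  have hsqrt : √((4 * K)⁻¹) = (2 * √K)⁻¹ := by
    rw [sqrt_inv, sqrt_mul zero_le_four, show (4 : ℝ) = 2 ^ 2 by norm_num, sqrt_sq zero_le_two]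
  rwa [integral_Ioi_inv_mul_inv_one_add_sq, hsqrt] at h

theorem density_mode_bound_general [CompleteSpace E] (hK : 1 ≤ K)
    (hg : AEStronglyMeasurable g (volume.restrict (Set.Ioi 0)))
    (hint : IntegrableOn (fun w => ‖g w‖ ^ 2 * (2 * π * w * (1 + w ^ 2))) (Set.Ioi 0)) :
    IntegrableOn (fun w => (J0 (K * w) * w) • g w) (Set.Ioi 0) ∧
    (1 + K ^ 2) ^ ((1 : ℝ) / 4) * ‖(2 * π) • ∫ w in Set.Ioi 0, (J0 (K * w) * w) • g w‖ ≤
      2 ^ ((1 : ℝ) / 4) * π * √(∫ w in Set.Ioi 0, ‖g w‖ ^ 2 * (2 * π * w * (1 + w ^ 2))) := by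
  have hK₀ : 0 < K := one_pos.trans_le hK
  refine ⟨integrableOn_J0_smul hK₀ hg hint, ?_⟩
  set I := ∫ w in Set.Ioi 0, ‖g w‖ ^ 2 * (2 * π * w * (1 + w ^ 2))
  have hnorm : ‖∫ w in Set.Ioi 0, (J0 (K * w) * w) • g w‖ ≤ √I * (2 * √K)⁻¹ :=
    (norm_integral_le_integral_norm _).trans (integral_norm_J0_smul_le hK₀ hint)
  calc (1 + K ^ 2) ^ ((1 : ℝ) / 4) * ‖(2 * π) • ∫ w in Set.Ioi 0, (J0 (K * w) * w) • g w‖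
      = (1 + K ^ 2) ^ ((1 : ℝ) / 4) * (2 * π * ‖∫ w in Set.Ioi 0, (J0 (K * w) * w) • g w‖) := by
        rw [norm_smul, norm_of_nonneg two_pi_pos.le]
    _ ≤ 2 ^ ((1 : ℝ) / 4) * √K * (2 * π * (√I * (2 * √K)⁻¹)) := by
        gcongr
        exact one_add_sq_rpow_quarter_le hK
    _ = 2 ^ ((1 : ℝ) / 4) * π * √I := by field_simp

end GyroAverage

/-- Per-Fourier-mode form of the estimate
`‖ρ - 1‖_{H^{s+1/2}} ≤ 2^{1/4} π ‖f‖_{L²_m(H^s)}` for the gyro-averaged density. -/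
theorem density_mode_bound (k : ℤ × ℤ) (hk : k ≠ 0) (g : ℝ → ℂ)
    (hmeas : Measurable g)
    (hint : IntegrableOn
      (fun w => ‖g w‖ ^ 2 * (2 * Real.pi * w * (1 + w ^ 2))) (Set.Ioi (0:ℝ))) :
    IntegrableOn (fun w => (J0 (eNorm k * w) : ℂ) * g w * (w : ℂ)) (Set.Ioi (0:ℝ)) ∧
    (1 + eNorm k ^ 2) ^ ((1:ℝ)/4) *
        ‖(2 * Real.pi : ℂ) * ∫ w in Set.Ioi (0:ℝ), (J0 (eNorm k * w) : ℂ) * g w * (w : ℂ)‖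
      ≤ (2:ℝ) ^ ((1:ℝ)/4) * Real.pi *
        Real.sqrt (∫ w in Set.Ioi (0:ℝ), ‖g w‖ ^ 2 * (2 * Real.pi * w * (1 + w ^ 2))) := by
  simpa [mul_right_comm _ (g _)] using
    density_mode_bound_general (one_le_eNorm hk) hmeas.aestronglyMeasurable hint
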